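/- arXiv:2604.21810 — 7 statements merged into one kernel-verified Lean document; each statement's English description precedes it below -/
import Mathlib

section
/- Let n, k₁, k₂ be positive integers with n ≥ k₁ + k₂ − 1. The linear map from ℝⁿ to ℝ^{n−k₁+1} × ℝ^{n−k₂+1} sending u to the pair of valid convolutions (u ⊛ b_{k₁}, u ⊛ b_{k₂}) is injective if and only if gcd(k₁, k₂) = 1. -/
/-- Valid convolution of `u : ℝⁿ` with the box of size `k`:
`(u ⊛ b_k)(t) = ∑_{s=0}^{k-1} u(t+s)` for `t = 0, …, n-k`. -/
noncomputable def validConv (n k : ℕ) (u : Fin n → ℝ) (t : Fin (n - k + 1)) : ℝ :=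
  ∑ s ∈ Finset.range k, if h : (t : ℕ) + s < n then u ⟨(t : ℕ) + s, h⟩ else 0

/-!
Write `u i = U (i + 1) - U i` with `U` the partial sums of `u`. Convolution with the box of size `k`
telescopes to `U (t + k) - U t`, so it kills `u` exactly when the word `U 0, …, U n` has period `k`.
By the Fine–Wilf theorem a word of length at least `k₁ + k₂ - gcd k₁ k₂` has periods `k₁` and `k₂`
if and only if it has period `gcd k₁ k₂`. Hence the common kernel of the two convolutions is the
kernel of the convolution with the box of size `gcd k₁ k₂`, which is trivial only for size `1`.
-/

theorem gcd_le_of_le {l m n : ℕ} (hl : l ≤ n) (hm : m ≤ n) : l.gcd m ≤ n := by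
  rcases Nat.eq_zero_or_pos l with rfl | hl_pos
  · simpa using hm
  · exact (Nat.gcd_le_left m hl_pos).trans hl

section Words

variable {α : Type*}

theorem hasPeriod_of_dvd {w : List α} {p q : ℕ} (hpq : p ∣ q) (hp : w.HasPeriod p) :
    w.HasPeriod q := by
  rw [List.hasPeriod_iff_forall_getElem?_mod] at hp ⊢
  intro i hi
  rw [hp i hi, hp (i % q) ((Nat.mod_le i q).trans_lt hi), Nat.mod_mod_of_dvd i hpq]

theorem hasPeriod_gcd_iff {w : List α} {p q : ℕ} (hw : p + q - p.gcd q ≤ w.length) :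
    w.HasPeriod (p.gcd q) ↔ w.HasPeriod p ∧ w.HasPeriod q :=
  ⟨fun h ↦ ⟨hasPeriod_of_dvd (p.gcd_dvd_left q) h, hasPeriod_of_dvd (p.gcd_dvd_right q) h⟩,
    fun h ↦ h.1.gcd h.2 hw⟩

theorem hasPeriod_map_range_iff {U : ℕ → α} {n p : ℕ} :
    ((List.range (n + 1)).map U).HasPeriod p ↔ ∀ t, t + p ≤ n → U (t + p) = U t := by
  rw [List.hasPeriod_iff_getElem?, List.length_map, List.length_range]
  refine forall_congr' fun t ↦ ?_
  rw [← Nat.lt_succ_iff, ← Nat.lt_sub_iff_add_lt]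
  refine imp_congr_right fun _ ↦ ?_
  have ht₀ : t < n + 1 := by omega
  have htp : t + p < n + 1 := by omega
  simp [ht₀, htp, eq_comm]

end Words

/-- Valid convolution with the box of size `k`, as an additive map, for coefficients in any
additive commutative monoid; for real coefficients it is `validConv`, with the same value `0` for
the entries of `u` that are out of range (there are none when `k ≤ n`). -/
def boxConv {M : Type*} [AddCommMonoid M] (n k : ℕ) : (Fin n → M) →+ (Fin (n - k + 1) → M) where
  toFun u t := ∑ s ∈ Finset.range k, if h : (t : ℕ) + s < n then u ⟨(t : ℕ) + s, h⟩ else 0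
  map_zero' := by
    ext t
    simp
  map_add' u v := by
    ext t
    simp only [Pi.add_apply, ← Finset.sum_add_distrib]
    refine Finset.sum_congr rfl fun s _ ↦ ?_
    split_ifs <;> simp

section AddCommMonoid

variable {M : Type*} [AddCommMonoid M] {n k : ℕ}

theorem boxConv_apply (hk : k ≤ n) (u : Fin n → M) (t : Fin (n - k + 1)) :
    boxConv n k u t = ∑ s : Fin k, u ⟨t + s, by omega⟩ :=
  (Finset.sum_range _).trans (Finset.sum_congr rfl fun _ _ ↦ dif_pos (by omega))

theorem boxConv_one_injective : Function.Injective (boxConv (M := M) n 1) := by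
  intro u v huv
  ext i
  simpa [boxConv] using congrFun huv ⟨i, by omega⟩

end AddCommMonoid

section AddCommGroup

variable {M : Type*} [AddCommGroup M] {n k k₁ k₂ : ℕ}

theorem exists_fwdDiff_eq (u : Fin n → M) : ∃ U : ℕ → M, (fun i : Fin n ↦ fwdDiff 1 U i) = u := by
  refine ⟨fun m ↦ ∑ i ∈ Finset.range m, if h : i < n then u ⟨i, h⟩ else 0, ?_⟩
  ext i
  simp [fwdDiff, Finset.sum_range_succ]

theorem boxConv_fwdDiff (hk : k ≤ n) (U : ℕ → M) (t : Fin (n - k + 1)) :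
    boxConv n k (fun i ↦ fwdDiff 1 U i) t = U (t + k) - U t :=
  calc
    boxConv n k (fun i ↦ fwdDiff 1 U i) t = ∑ s : Fin k, (U (t + (s + 1)) - U (t + s)) :=
      boxConv_apply hk _ t
    _ = ∑ s ∈ Finset.range k, (U (t + (s + 1)) - U (t + s)) :=
      (Finset.sum_range fun s ↦ U (t + (s + 1)) - U (t + s)).symm
    _ = U (t + k) - U t := Finset.sum_range_sub (fun s ↦ U (t + s)) k

theorem boxConv_fwdDiff_eq_zero_iff (hk : k ≤ n) (U : ℕ → M) :
    boxConv n k (fun i ↦ fwdDiff 1 U i) = 0 ↔ ((List.range (n + 1)).map U).HasPeriod k := by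
  simp only [hasPeriod_map_range_iff, funext_iff, boxConv_fwdDiff hk, Pi.zero_apply, sub_eq_zero]
  exact ⟨fun h t ht ↦ h ⟨t, by omega⟩, fun h t ↦ h t (by omega)⟩

theorem boxConv_gcd_eq_zero_iff (hk₁ : k₁ ≤ n) (hk₂ : k₂ ≤ n)
    (hsum : k₁ + k₂ - k₁.gcd k₂ ≤ n + 1) (u : Fin n → M) :
    boxConv n (k₁.gcd k₂) u = 0 ↔ boxConv n k₁ u = 0 ∧ boxConv n k₂ u = 0 := by
  obtain ⟨U, rfl⟩ := exists_fwdDiff_eq u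
  rw [boxConv_fwdDiff_eq_zero_iff (gcd_le_of_le hk₁ hk₂), boxConv_fwdDiff_eq_zero_iff hk₁,
    boxConv_fwdDiff_eq_zero_iff hk₂]
  exact hasPeriod_gcd_iff (by simpa using hsum)

theorem exists_ne_zero_boxConv_eq_zero [Nontrivial M] (hn : 0 < n) (hk : k ≤ n) (hk_ne : k ≠ 1) :
    ∃ u : Fin n → M, u ≠ 0 ∧ boxConv n k u = 0 := by
  obtain ⟨a, ha⟩ := exists_ne (0 : M)
  let U : ℕ → M := fun t ↦ if t % k = 1 then a else 0
  refine ⟨fun i ↦ fwdDiff 1 U i, fun hU ↦ ha ?_, ?_⟩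
  · have h_one : 1 % k = 1 := Nat.one_mod_eq_one.2 hk_ne
    simpa [U, fwdDiff, h_one] using congrFun hU ⟨0, hn⟩
  · ext t
    simp [boxConv_fwdDiff hk, U]

theorem boxConv_injective_iff [Nontrivial M] (hn : 0 < n) (hk : k ≤ n) :
    Function.Injective (boxConv (M := M) n k) ↔ k = 1 := by
  constructor
  · intro hinj
    by_contra hk_ne
    obtain ⟨u, hu_ne, hu⟩ := exists_ne_zero_boxConv_eq_zero (M := M) hn hk hk_ne
    exact hu_ne ((injective_iff_map_eq_zero _).1 hinj u hu)
  · rintro rfl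
    exact boxConv_one_injective

theorem stmt0_general [Nontrivial M] (hn : 0 < n) (hk₁ : k₁ ≤ n) (hk₂ : k₂ ≤ n)
    (hsum : k₁ + k₂ ≤ n + 2) :
    Function.Injective (fun u : Fin n → M ↦ (boxConv n k₁ u, boxConv n k₂ u)) ↔
      k₁.gcd k₂ = 1 := by
  have hlen : k₁ + k₂ - k₁.gcd k₂ ≤ n + 1 := by
    rcases Nat.eq_zero_or_pos (k₁.gcd k₂) with h | h
    · have := Nat.gcd_eq_zero_iff.1 h
      omega
    · omega
  change Function.Injective ((boxConv (M := M) n k₁).prod (boxConv n k₂)) ↔ _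
  rw [← boxConv_injective_iff (M := M) hn (gcd_le_of_le hk₁ hk₂), injective_iff_map_eq_zero,
    injective_iff_map_eq_zero]
  simp only [boxConv_gcd_eq_zero_iff hk₁ hk₂ hlen, AddMonoidHom.prod_apply, Prod.mk_eq_zero]

end AddCommGroup

theorem stmt0 (n k₁ k₂ : ℕ) (hn : 0 < n) (hk₁ : 0 < k₁) (hk₂ : 0 < k₂)
    (hsum : k₁ + k₂ - 1 ≤ n) :
    Function.Injective
      (fun u : Fin n → ℝ => (validConv n k₁ u, validConv n k₂ u)) ↔
    Nat.gcd k₁ k₂ = 1 :=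
  stmt0_general hn (by omega) (by omega) (by omega)
end

section
/- Let n, k₁, k₂ be positive integers with k₁, k₂ ≤ n and let r = gcd(k₁, k₂) satisfy r ≥ 2. Then every x ∈ ℝⁿ that is r-periodic (x(a+r) = x(a) whenever both a and a+r lie in {0,…,n−1}) and satisfies Σ_{a=0}^{r−1} x(a) = 0 lies in the kernel of the map u ↦ (u ⊛ b_{k₁}, u ⊛ b_{k₂}); moreover, there exists a nonzero x ∈ ℝⁿ with these two properties. -/
/- Reading the `r`-periodic vector `x` through a sliding window of length `r`, each step drops `x t`
and picks up `x (t + r) = x t`, so all window sums agree with the first one. When `r ∣ k`, a box of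
size `k` is a concatenation of such windows, so its sums all vanish as soon as the first window sum
does. The pattern `1, -1, 0, …, 0` of length `r ≥ 2`, repeated, gives a nonzero such `x`. -/

open Finset

/-- The zero extension to `ℕ` of a vector indexed by `Fin n`, so that box sums can be handled as
sums over `range` without proofs of index bounds. -/
def zeroExtend {M : Type*} [Zero M] {n : ℕ} (x : Fin n → M) (a : ℕ) : M :=
  if h : a < n then x ⟨a, h⟩ else 0

/-- `r`-periodicity of the values of a sequence on `{0, …, n - 1}`; the values from `n` on are
unconstrained. -/
def PeriodicBelow {M : Type*} (n r : ℕ) (f : ℕ → M) : Prop :=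
  ∀ a, a + r < n → f (a + r) = f a

theorem periodicBelow_zeroExtend {M : Type*} [Zero M] {n r : ℕ} {x : Fin n → M}
    (hx : ∀ (a : Fin n) (h : (a : ℕ) + r < n), x ⟨(a : ℕ) + r, h⟩ = x a) :
    PeriodicBelow n r (zeroExtend x) := by
  intro a h
  have ha : a < n := by omega
  simpa only [zeroExtend, dif_pos h, dif_pos ha] using hx ⟨a, ha⟩ h

namespace PeriodicBelow

variable {M : Type*} [AddCommMonoid M] {n r : ℕ} {f : ℕ → M}

theorem sum_range_add_succ (hf : PeriodicBelow n r f) {t : ℕ} (ht : t + r < n) :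
    ∑ s ∈ range r, f (t + 1 + s) = ∑ s ∈ range r, f (t + s) := by
  cases r with
  | zero => simp
  | succ m =>
    have hlast : f (t + 1 + m) = f t := by
      simpa only [add_assoc, add_comm 1 m] using hf t ht
    rw [sum_range_succ, sum_range_succ', hlast, add_zero]
    simp only [add_assoc, add_comm 1]

theorem sum_range_add_eq (hf : PeriodicBelow n r f) {t : ℕ} (ht : t + r ≤ n) :
    ∑ s ∈ range r, f (t + s) = ∑ s ∈ range r, f s := by
  induction t with
  | zero => simp only [zero_add]
  | succ t ih => rw [hf.sum_range_add_succ (by omega), ih (by omega)]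

theorem sum_range_mul_add_eq_nsmul (hf : PeriodicBelow n r f) {t q : ℕ} (ht : t + r * q ≤ n) :
    ∑ s ∈ range (r * q), f (t + s) = q • ∑ s ∈ range r, f s := by
  induction q with
  | zero => simp
  | succ q ih =>
    rw [Nat.mul_succ, ← add_assoc] at ht
    have hblock : ∑ s ∈ range r, f (t + (r * q + s)) = ∑ s ∈ range r, f s := by
      simpa only [add_assoc] using hf.sum_range_add_eq ht
    rw [Nat.mul_succ, sum_range_add, ih (by omega), hblock, succ_nsmul]

end PeriodicBelow

theorem validConv_apply (n k : ℕ) (u : Fin n → ℝ) (t : Fin (n - k + 1)) :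
    validConv n k u t = ∑ s ∈ range k, zeroExtend u (t + s) :=
  rfl

theorem validConv_eq_zero_of_dvd {n k r : ℕ} (hk : k ≤ n) (hrk : r ∣ k) {x : Fin n → ℝ}
    (hx : PeriodicBelow n r (zeroExtend x)) (hsum : ∑ a ∈ range r, zeroExtend x a = 0) :
    validConv n k x = 0 := by
  obtain ⟨q, rfl⟩ := hrk
  ext t
  have ht : (t : ℕ) + r * q ≤ n := by omega
  rw [validConv_apply, hx.sum_range_mul_add_eq_nsmul ht, hsum, smul_zero, Pi.zero_apply]

theorem exists_ne_zero_periodic_sum_eq_zero (M : Type*) [AddCommGroup M] [Nontrivial M] {n r : ℕ}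
    (hn : 2 ≤ n) (hr : 2 ≤ r) :
    ∃ x : Fin n → M, x ≠ 0 ∧
      (∀ (a : Fin n) (h : (a : ℕ) + r < n), x ⟨(a : ℕ) + r, h⟩ = x a) ∧
      ∑ a ∈ range r, zeroExtend x a = 0 := by
  obtain ⟨c, hc⟩ := exists_ne (0 : M)
  let pattern : ℕ → M := Pi.single 0 c - Pi.single 1 c
  refine ⟨fun a => pattern (a % r), fun hzero => hc ?_, fun a _ => by simp, ?_⟩
  · simpa [pattern] using congrFun hzero ⟨0, by omega⟩
  · have hext : ∀ a ∈ range r, zeroExtend (fun a : Fin n => pattern (a % r)) a = pattern a := by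
      intro a ha
      by_cases han : a < n
      · simp only [zeroExtend, dif_pos han, Nat.mod_eq_of_lt (mem_range.mp ha)]
      · have h0 : a ≠ 0 := by omega
        have h1 : a ≠ 1 := by omega
        simp [zeroExtend, han, pattern, h0, h1]
    have h0 : 0 < r := by omega
    have h1 : 1 < r := by omega
    rw [sum_congr rfl hext]
    simp [pattern, sum_pi_single', h0, h1]

theorem stmt1_general (n k₁ k₂ r : ℕ) (h₁ : k₁ ≤ n) (h₂ : k₂ ≤ n) (hrn : r ≤ n)
    (hdvd₁ : r ∣ k₁) (hdvd₂ : r ∣ k₂) (hr2 : 2 ≤ r) :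
    (∀ x : Fin n → ℝ,
      (∀ (a : Fin n) (h : (a : ℕ) + r < n), x ⟨(a : ℕ) + r, h⟩ = x a) →
      (∑ a ∈ Finset.range r, if h : a < n then x ⟨a, h⟩ else 0) = 0 →
      validConv n k₁ x = 0 ∧ validConv n k₂ x = 0) ∧
    (∃ x : Fin n → ℝ, x ≠ 0 ∧
      (∀ (a : Fin n) (h : (a : ℕ) + r < n), x ⟨(a : ℕ) + r, h⟩ = x a) ∧
      (∑ a ∈ Finset.range r, if h : a < n then x ⟨a, h⟩ else 0) = 0) := by
  refine ⟨fun x hx hsum => ?_, exists_ne_zero_periodic_sum_eq_zero ℝ (hr2.trans hrn) hr2⟩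
  have hper := periodicBelow_zeroExtend hx
  exact ⟨validConv_eq_zero_of_dvd h₁ hdvd₁ hper hsum, validConv_eq_zero_of_dvd h₂ hdvd₂ hper hsum⟩

theorem stmt1 (n k₁ k₂ r : ℕ) (hn : 0 < n) (hk₁ : 0 < k₁) (hk₂ : 0 < k₂)
    (h₁ : k₁ ≤ n) (h₂ : k₂ ≤ n) (hr : r = Nat.gcd k₁ k₂) (hr2 : 2 ≤ r) :
    (∀ x : Fin n → ℝ,
      (∀ (a : Fin n) (h : (a : ℕ) + r < n), x ⟨(a : ℕ) + r, h⟩ = x a) →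
      (∑ a ∈ Finset.range r, if h : a < n then x ⟨a, h⟩ else 0) = 0 →
      validConv n k₁ x = 0 ∧ validConv n k₂ x = 0) ∧
    (∃ x : Fin n → ℝ, x ≠ 0 ∧
      (∀ (a : Fin n) (h : (a : ℕ) + r < n), x ⟨(a : ℕ) + r, h⟩ = x a) ∧
      (∑ a ∈ Finset.range r, if h : a < n then x ⟨a, h⟩ else 0) = 0) := by
  have hdvd₁ : r ∣ k₁ := hr ▸ Nat.gcd_dvd_left k₁ k₂
  have hdvd₂ : r ∣ k₂ := hr ▸ Nat.gcd_dvd_right k₁ k₂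
  exact stmt1_general n k₁ k₂ r h₁ h₂ ((Nat.le_of_dvd hk₁ hdvd₁).trans h₁) hdvd₁ hdvd₂ hr2
end

section
/- Let u : ℤ² → ℝ and for a positive integer m define the m×m window sum y_m(a,b) = Σ_{s=0}^{m−1} Σ_{t=0}^{m−1} u(a+s, b+t). Then for every positive integer k and all (a,b) ∈ ℤ²: u(a,b) = y_k(a+1, b−k) + y_k(a−k, b+1) + y_{k+1}(a, b) + y_{k+1}(a−k, b−k) − y_{2k+1}(a−k, b−k). -/
/-- The `m×m` window sum of a two-dimensional signal `u : ℤ² → ℝ` at position `(a,b)`: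
`y_m(a,b) = ∑_{s=0}^{m-1} ∑_{t=0}^{m-1} u(a+s, b+t)`. -/
noncomputable def winSum (u : ℤ × ℤ → ℝ) (m : ℕ) (a b : ℤ) : ℝ :=
  ∑ s ∈ Finset.range m, ∑ t ∈ Finset.range m, u (a + s, b + t)

/-!
Two boxes that share only the pixel `p`, the top corner of one and the bottom corner of the other,
together with the two boxes off the diagonal cover one large box. Only `p` is covered twice, so
`u p` is the sum over the four boxes minus the sum over the large one.
-/

section RectSum

variable {R M : Type*}

/-- The sum of a signal `u` over the `m × n` rectangular window with lowest corner `(a, b)`.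
Rectangles, unlike the squares of `winSum`, can be cut in one direction at a time. Coordinates lie
in any `R` with a `1` to step by, for example `ZMod N` for periodic signals. -/
def rectSum [AddMonoidWithOne R] [AddCommMonoid M] (u : R × R → M) (m n : ℕ) (a b : R) : M :=
  ∑ s ∈ Finset.range m, ∑ t ∈ Finset.range n, u (a + s, b + t)

section AddCommMonoid

variable [AddMonoidWithOne R] [AddCommMonoid M] (u : R × R → M)

theorem rectSum_one_one (a b : R) : rectSum u 1 1 a b = u (a, b) := by
  simp [rectSum]

theorem rectSum_add_left (m m' n : ℕ) (a b : R) :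
    rectSum u (m + m') n a b = rectSum u m n a b + rectSum u m' n (a + m) b := by
  simp [rectSum, Finset.sum_range_add, add_assoc]

theorem rectSum_add_right (m n n' : ℕ) (a b : R) :
    rectSum u m (n + n') a b = rectSum u m n a b + rectSum u m n' a (b + n) := by
  simp [rectSum, Finset.sum_range_add, Finset.sum_add_distrib, add_assoc]

theorem rectSum_succ_left (m n : ℕ) (a b : R) :
    rectSum u (m + 1) n a b = rectSum u 1 n a b + rectSum u m n (a + 1) b := by
  rw [add_comm m, rectSum_add_left, Nat.cast_one]

theorem rectSum_add_apply_eq (m m' n n' : ℕ) (a b : R) :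
    rectSum u (m + m' + 1) (n + n' + 1) a b + u (a + m, b + n) =
      rectSum u m' n (a + m + 1) b + rectSum u m n' a (b + n + 1) +
        rectSum u (m' + 1) (n' + 1) (a + m) (b + n) + rectSum u (m + 1) (n + 1) a b := by
  have whole : rectSum u (m + m' + 1) (n + n' + 1) a b =
      rectSum u m (n + 1) a b + rectSum u m n' a (b + n + 1) +
        (rectSum u (m' + 1) n (a + m) b + rectSum u (m' + 1) (n' + 1) (a + m) (b + n)) := by
    calc rectSum u (m + m' + 1) (n + n' + 1) a b
      _ = rectSum u m (n + 1 + n') a b + rectSum u (m' + 1) (n + (n' + 1)) (a + m) b := by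
        rw [add_assoc m, rectSum_add_left, add_right_comm n 1 n', add_assoc n]
      _ = _ := by
        rw [rectSum_add_right u m, rectSum_add_right u (m' + 1), Nat.cast_succ, add_assoc b]
  have lower : rectSum u (m + 1) (n + 1) a b =
      rectSum u m (n + 1) a b + (rectSum u 1 n (a + m) b + u (a + m, b + n)) := by
    rw [rectSum_add_left, rectSum_add_right u 1, rectSum_one_one]
  rw [whole, lower, rectSum_succ_left u m' n]
  abel

end AddCommMonoid

theorem stmt4_general [AddGroupWithOne R] [AddCommGroup M] (u : R × R → M) (m m' n n' : ℕ)
    (a b : R) :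
    u (a, b) =
      rectSum u m' n (a + 1) (b - n) + rectSum u m n' (a - m) (b + 1) +
        rectSum u (m' + 1) (n' + 1) a b + rectSum u (m + 1) (n + 1) (a - m) (b - n) -
        rectSum u (m + m' + 1) (n + n' + 1) (a - m) (b - n) := by
  rw [eq_sub_iff_add_eq']
  simpa only [sub_add_cancel] using rectSum_add_apply_eq u m m' n n' (a - m) (b - n)

end RectSum

theorem stmt4 (u : ℤ × ℤ → ℝ) (k : ℕ) (hk : 0 < k) (a b : ℤ) :
    u (a, b) =
      winSum u k (a + 1) (b - k) + winSum u k (a - k) (b + 1) +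
        winSum u (k + 1) a b + winSum u (k + 1) (a - k) (b - k) -
        winSum u (2 * k + 1) (a - k) (b - k) := by
  rw [two_mul]
  exact stmt4_general u k k k k a b
end

section
/- Fix positive integers d and k with k ≥ 2. For every ε > 0 there exists n₀ ∈ ℕ such that for all n ≥ n₀, the number of discrete frequencies at which the DFT of the d-dimensional normalized box filter of size k is ε-near zero satisfies #{ (ω₁,…,ω_d) ∈ (2π/n)[n]^d : |b̄_k(ω₁,…,ω_d)| ≤ ε } ≥ d(k−1)n^{d−1} − (d choose 2)(k−1)²n^{d−2}. -/
open scoped BigOperators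

/-- The `d`-dimensional normalized box filter of size `k` on `[n]^d` (indices in `ℤ/nℤ`,
represented by `Fin n`): value `1/k^d` if every coordinate is in `{0,…,k-1}`, else `0`. -/
noncomputable def boxC (n k d : ℕ) : (Fin d → Fin n) → ℂ :=
  fun t => if ∀ ℓ, (t ℓ : ℕ) < k then 1 / (k : ℂ) ^ d else 0

/-- Cyclic convolution on `(ℤ/nℤ)^d`: `(u ⊛ b)(t) = ∑_s b(s) u(t - s)`, indices mod `n`. -/
noncomputable def cconv (n d : ℕ) (b u : (Fin d → Fin n) → ℂ) : (Fin d → Fin n) → ℂ :=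
  fun t => ∑ s : Fin d → Fin n, b s * u fun ℓ => t ℓ - s ℓ

/-- Discrete Fourier transform of `v` at the discrete frequency `ω = 2πm/n`, `m ∈ [n]^d`:
`v̄(ω) = ∑_{t ∈ [n]^d} v(t) e^{-i ∑_ℓ t_ℓ ω_ℓ}`. -/
noncomputable def dft (n d : ℕ) (v : (Fin d → Fin n) → ℂ) (m : Fin d → Fin n) : ℂ :=
  ∑ t : Fin d → Fin n, v t *
    Complex.exp (-Complex.I * ∑ ℓ, ((t ℓ : ℕ) : ℂ) * (2 * (Real.pi : ℂ) * ((m ℓ : ℕ) : ℂ) / (n : ℂ)))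

/-
The transform of the box filter is a product of normalized Dirichlet kernels `boxSymbol k`, one per
coordinate, each of norm at most `1`. So it suffices that a single coordinate frequency lies near
one of the `k - 1` zeros `2πj/k` (`0 < j < k`) of the kernel: rounding `nj/k` down to an integer
moves the frequency by at most `2π/n`, and the kernel is `k`-Lipschitz. The frequencies with some
coordinate among these `k - 1` values are counted by inclusion–exclusion truncated after pairs.
-/

section

open Finset Complex
open scoped Real

section Counting

lemma sub_pow_add_two_le_sub_add_choose_two_mul
    {R : Type*} [CommRing R] [LinearOrder R] [IsStrictOrderedRing R]
    {x a : R} (ha : 0 ≤ a) (hax : a ≤ x) (e : ℕ) :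
    (x - a) ^ (e + 2) ≤
      x ^ (e + 2) - (e + 2) * a * x ^ (e + 1) + ((e + 2).choose 2 : R) * a ^ 2 * x ^ e := by
  induction e with
  | zero => exact le_of_eq (by rw [zero_add, Nat.choose_self]; push_cast; ring)
  | succ e ih =>
    have hx : 0 ≤ x := ha.trans hax
    have choose_succ : ((e + 3).choose 2 : R) = (e + 2) + ((e + 2).choose 2 : R) := by
      rw [Nat.choose_succ_succ' (e + 2) 1, Nat.choose_one_right]
      push_cast
      ring
    have cubic_nonneg : 0 ≤ ((e + 2).choose 2 : R) * a ^ 3 * x ^ e := by positivity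
    calc (x - a) ^ (e + 3) = (x - a) ^ (e + 2) * (x - a) := pow_succ _ _
      _ ≤ (x ^ (e + 2) - (e + 2) * a * x ^ (e + 1) + ((e + 2).choose 2 : R) * a ^ 2 * x ^ e) *
          (x - a) := mul_le_mul_of_nonneg_right ih (sub_nonneg.2 hax)
      _ = x ^ (e + 3) - ((e + 2) + 1) * a * x ^ (e + 2) +
          ((e + 2) + ((e + 2).choose 2 : R)) * a ^ 2 * x ^ (e + 1) -
          ((e + 2).choose 2 : R) * a ^ 3 * x ^ e := by ring
      _ ≤ _ := by
        rw [choose_succ]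
        push_cast
        linarith

lemma sub_pow_le_sub_add_choose_two_mul
    {R : Type*} [CommRing R] [LinearOrder R] [IsStrictOrderedRing R]
    {x a : R} (ha : 0 ≤ a) (hax : a ≤ x) :
    ∀ d : ℕ, (x - a) ^ d ≤
      x ^ d - d * a * x ^ (d - 1) + (d.choose 2 : R) * a ^ 2 * x ^ (d - 2)
  | 0 => by simp
  | 1 => by simp
  | e + 2 => by simpa using sub_pow_add_two_le_sub_add_choose_two_mul ha hax e

lemma natCard_exists_mem {ι α : Type*} [Fintype ι] [Fintype α] (S : Finset α) :
    (Nat.card {m : ι → α // ∃ i, m i ∈ S} : ℝ) =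
      Fintype.card α ^ Fintype.card ι - ((Fintype.card α : ℝ) - #S) ^ Fintype.card ι := by
  classical
  have avoiding : ({m : ι → α | ¬∃ i, m i ∈ S} : Finset (ι → α)) = Fintype.piFinset fun _ ↦ Sᶜ := by
    ext m
    simp
  have split := card_filter_add_card_filter_not (s := (univ : Finset (ι → α))) fun m ↦ ∃ i, m i ∈ S
  rw [avoiding, Fintype.card_piFinset, prod_const, card_compl, card_univ, card_univ,
    Fintype.card_fun] at split
  rw [Nat.card_eq_fintype_card, Fintype.card_subtype, eq_sub_iff_add_eq,
    ← Nat.cast_sub S.card_le_univ]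
  exact_mod_cast split

lemma le_natCard_exists_mem {ι α : Type*} [Fintype ι] [Fintype α] (S : Finset α) :
    (Fintype.card ι : ℝ) * #S * Fintype.card α ^ (Fintype.card ι - 1) -
        (Fintype.card ι).choose 2 * (#S : ℝ) ^ 2 * Fintype.card α ^ (Fintype.card ι - 2) ≤
      Nat.card {m : ι → α // ∃ i, m i ∈ S} := by
  have bonferroni := sub_pow_le_sub_add_choose_two_mul (x := (Fintype.card α : ℝ))
    (Nat.cast_nonneg #S) (mod_cast S.card_le_univ) (Fintype.card ι)
  rw [natCard_exists_mem]
  linarith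

end Counting

section BoxSymbol

/-- The normalized Dirichlet kernel `θ ↦ (1/k) ∑_{t < k} e^{-itθ}`, i.e. the Fourier transform of
the one-dimensional box filter of size `k` at an arbitrary real frequency. It is `0` for `k = 0`. -/
noncomputable def boxSymbol (k : ℕ) (θ : ℝ) : ℂ :=
  (∑ t ∈ range k, exp ((-(t * θ) : ℝ) * I)) / k

lemma norm_boxSymbol_le_one (k : ℕ) (θ : ℝ) : ‖boxSymbol k θ‖ ≤ 1 := by
  rw [boxSymbol, norm_div, norm_natCast]
  refine div_le_one_of_le₀ ?_ k.cast_nonneg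
  calc _ ≤ ∑ t ∈ range k, ‖exp ((-(t * θ) : ℝ) * I)‖ := norm_sum_le _ _
    _ = k := by simp only [norm_exp_ofReal_mul_I, sum_const, card_range, nsmul_one]

lemma dist_exp_ofReal_mul_I_le (x y : ℝ) : dist (exp (x * I)) (exp (y * I)) ≤ dist x y := by
  simpa [circleMap_zero] using (lipschitzWith_circleMap 0 1).dist_le_mul x y

lemma lipschitzWith_boxSymbol (k : ℕ) : LipschitzWith k (boxSymbol k) := by
  refine LipschitzWith.of_dist_le_mul fun θ φ ↦ ?_
  have term_le : ∀ t ∈ range k,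
      dist (exp ((-(t * θ) : ℝ) * I)) (exp ((-(t * φ) : ℝ) * I)) ≤ k * dist θ φ := fun t ht ↦
    calc _ ≤ dist (-(t * θ)) (-(t * φ)) := dist_exp_ofReal_mul_I_le _ _
      _ = t * dist θ φ := by
        rw [dist_neg_neg, Real.dist_eq, ← mul_sub, abs_mul, Nat.abs_cast, Real.dist_eq]
      _ ≤ k * dist θ φ := by
        gcongr
        exact (mem_range.1 ht).le
  rw [boxSymbol, boxSymbol, dist_eq_norm, ← sub_div, norm_div, norm_natCast, ← dist_eq_norm]
  refine div_le_of_le_mul₀ k.cast_nonneg (by positivity) ?_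
  refine (dist_sum_sum_le_of_le _ term_le).trans_eq ?_
  simp [mul_comm]

lemma boxSymbol_two_pi_mul_div {k j : ℕ} (hj : ¬k ∣ j) : boxSymbol k (2 * π * (j / k)) = 0 := by
  rcases eq_or_ne k 0 with rfl | hk
  · simp [boxSymbol]
  have hζ := (isPrimitiveRoot_exp k hk).inv
  set ζ := (exp (2 * π * I / k))⁻¹ with ζ_def
  have term_eq (t : ℕ) : exp ((-(t * (2 * π * (j / k))) : ℝ) * I) = (ζ ^ j) ^ t := by
    rw [ζ_def, ← exp_neg, ← exp_nat_mul, ← exp_nat_mul]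
    push_cast
    ring_nf
  have ne_one : ζ ^ j ≠ 1 := mt (hζ.pow_eq_one_iff_dvd j).1 hj
  have pow_eq_one : (ζ ^ j) ^ k = 1 := by rw [pow_right_comm, hζ.pow_eq_one, one_pow]
  simp only [boxSymbol, term_eq]
  rw [geom_sum_eq ne_one, pow_eq_one, sub_self, zero_div, zero_div]

end BoxSymbol

section NearZeros

lemma dist_mul_div_div_le {n : ℕ} (hn : 0 < n) (k j : ℕ) :
    dist (((n * j / k : ℕ) : ℝ) / n) (j / k) ≤ 1 / n := by
  have hn' : (n : ℝ) ≠ 0 := mod_cast hn.ne'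
  have quotient_eq : (j : ℝ) / k = (n * j : ℕ) / k / n := by
    rw [Nat.cast_mul, mul_div_assoc, mul_div_cancel_left₀ _ hn']
  rw [quotient_eq, Real.dist_eq, ← sub_div, abs_div, Nat.abs_cast, ← Nat.floor_div_eq_div (K := ℝ)]
  gcongr
  exact Nat.abs_floor_sub_le (by positivity)

lemma norm_boxSymbol_mul_div_le {n k j : ℕ} (hn : 0 < n) (hj : ¬k ∣ j) :
    ‖boxSymbol k (2 * π * ((n * j / k : ℕ) / n))‖ ≤ 2 * π * k / n :=
  calc _ = dist (boxSymbol k (2 * π * ((n * j / k : ℕ) / n))) (boxSymbol k (2 * π * (j / k))) := by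
        rw [boxSymbol_two_pi_mul_div hj, dist_zero_right]
    _ ≤ k * dist (2 * π * ((n * j / k : ℕ) / n)) (2 * π * (j / k)) :=
        (lipschitzWith_boxSymbol k).dist_le_mul _ _
    _ = k * (2 * π * dist (((n * j / k : ℕ) : ℝ) / n) (j / k)) := by
        rw [Real.dist_eq, ← mul_sub, abs_mul, abs_of_pos Real.two_pi_pos, Real.dist_eq]
    _ ≤ k * (2 * π * (1 / n)) := by
        gcongr
        exact dist_mul_div_div_le hn k j
    _ = 2 * π * k / n := by ring

lemma strictMono_mul_div {n k : ℕ} (hk : 0 < k) (hkn : k ≤ n) :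
    StrictMono fun j ↦ n * j / k :=
  strictMono_nat_of_lt_succ fun j ↦
    calc n * j / k < (n * j + k) / k := by
          rw [Nat.add_div_right _ hk]
          exact Nat.lt_succ_self _
      _ ≤ n * (j + 1) / k := Nat.div_le_div_right (by rw [mul_add_one]; gcongr)

lemma exists_card_eq_forall_norm_boxSymbol_le {n k : ℕ} (hk : 0 < k) (hkn : k ≤ n) :
    ∃ S : Finset (Fin n), #S = k - 1 ∧
      ∀ m ∈ S, ‖boxSymbol k (2 * π * ((m : ℕ) / n))‖ ≤ 2 * π * k / n := by
  have mono := strictMono_mul_div hk hkn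
  have lt_n : ∀ m ∈ (Ioo 0 k).image fun j ↦ n * j / k, m < n := by
    simp only [mem_image, mem_Ioo]
    rintro _ ⟨j, ⟨-, hjk⟩, rfl⟩
    simpa [Nat.mul_div_cancel _ hk] using mono hjk
  refine ⟨attachFin _ lt_n, ?_, fun m hm ↦ ?_⟩
  · rw [card_attachFin, card_image_of_injective _ mono.injective, Nat.card_Ioo, Nat.sub_zero]
  · obtain ⟨j, hj, hjm⟩ := mem_image.1 (mem_attachFin lt_n |>.1 hm)
    obtain ⟨hj0, hjk⟩ := mem_Ioo.1 hj
    rw [← hjm]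
    exact norm_boxSymbol_mul_div_le (hk.trans_le hkn) (Nat.not_dvd_of_pos_of_lt hj0 hjk)

end NearZeros

section BoxTransform

variable {n k d : ℕ}

lemma dft_prod (f : Fin d → Fin n → ℂ) (m : Fin d → Fin n) :
    dft n d (fun t ↦ ∏ ℓ, f ℓ (t ℓ)) m =
      ∏ ℓ, ∑ x : Fin n, f ℓ x * exp ((-((x : ℕ) * (2 * π * ((m ℓ : ℕ) / n))) : ℝ) * I) := by
  rw [prod_univ_sum, Fintype.piFinset_univ, dft]
  refine sum_congr rfl fun t _ ↦ ?_
  rw [prod_mul_distrib, ← exp_sum, mul_sum]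
  congr 2
  refine sum_congr rfl fun ℓ _ ↦ ?_
  push_cast
  ring

lemma boxC_eq_prod (t : Fin d → Fin n) :
    boxC n k d t = ∏ ℓ, if (t ℓ : ℕ) < k then 1 / (k : ℂ) else 0 := by
  simp [boxC, prod_ite_zero]

lemma dft_boxC (hkn : k ≤ n) (m : Fin d → Fin n) :
    dft n d (boxC n k d) m = ∏ ℓ, boxSymbol k (2 * π * ((m ℓ : ℕ) / n)) := by
  have filter_lt : (range n).filter (· < k) = range k := by
    ext x
    simp only [mem_filter, mem_range]
    lia
  rw [funext boxC_eq_prod, dft_prod fun _ x ↦ if (x : ℕ) < k then 1 / (k : ℂ) else 0]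
  refine prod_congr rfl fun ℓ _ ↦ ?_
  rw [Fin.sum_univ_eq_sum_range (fun x ↦ (if x < k then 1 / (k : ℂ) else 0) *
    exp ((-(x * (2 * π * ((m ℓ : ℕ) / n))) : ℝ) * I)) n, boxSymbol]
  simp only [ite_mul, zero_mul]
  rw [← sum_filter, filter_lt, ← mul_sum, one_div_mul_eq_div]

lemma norm_dft_boxC_le (hkn : k ≤ n) (m : Fin d → Fin n) (ℓ : Fin d) :
    ‖dft n d (boxC n k d) m‖ ≤ ‖boxSymbol k (2 * π * ((m ℓ : ℕ) / n))‖ := by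
  rw [dft_boxC hkn, norm_prod]
  simpa using prod_le_prod_of_subset_of_le_one (subset_univ {ℓ})
    (fun i _ ↦ norm_nonneg (boxSymbol k (2 * π * ((m i : ℕ) / n))))
    (fun i _ _ ↦ norm_boxSymbol_le_one k _)

lemma le_natCard_norm_dft_boxC_le (d : ℕ) (hk : 0 < k) (hkn : k ≤ n) {ε : ℝ}
    (hε : 2 * π * k / n ≤ ε) :
    (d : ℝ) * ((k : ℝ) - 1) * (n : ℝ) ^ (d - 1) -
        (d.choose 2 : ℝ) * ((k : ℝ) - 1) ^ 2 * (n : ℝ) ^ (d - 2) ≤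
      (Nat.card {m : Fin d → Fin n // ‖dft n d (boxC n k d) m‖ ≤ ε} : ℝ) := by
  obtain ⟨S, card_S, near_zero⟩ := exists_card_eq_forall_norm_boxSymbol_le hk hkn
  have sub : {m : Fin d → Fin n | ∃ ℓ, m ℓ ∈ S} ⊆ {m | ‖dft n d (boxC n k d) m‖ ≤ ε} := by
    rintro m ⟨ℓ, hℓ⟩
    exact (norm_dft_boxC_le hkn m ℓ).trans ((near_zero _ hℓ).trans hε)
  have count := le_natCard_exists_mem (ι := Fin d) S
  rw [card_S, Nat.cast_pred hk, Fintype.card_fin, Fintype.card_fin] at count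
  exact count.trans (mod_cast Nat.card_mono (Set.toFinite _) sub)

end BoxTransform

end

theorem stmt11 (d k : ℕ) (hd : 0 < d) (hk : 2 ≤ k) (ε : ℝ) (hε : 0 < ε) :
    ∃ n₀ : ℕ, ∀ n : ℕ, n₀ ≤ n →
      (d : ℝ) * ((k : ℝ) - 1) * (n : ℝ) ^ (d - 1) -
          (d.choose 2 : ℝ) * ((k : ℝ) - 1) ^ 2 * (n : ℝ) ^ (d - 2) ≤
        (Nat.card {m : Fin d → Fin n // ‖dft n d (boxC n k d) m‖ ≤ ε} : ℝ) := by
  refine ⟨max k ⌈2 * Real.pi * k / ε⌉₊, fun n hn ↦ ?_⟩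
  have hkn : k ≤ n := (le_max_left _ _).trans hn
  have hn₀ : (0 : ℝ) < n := by exact_mod_cast (by lia : 0 < n)
  have le_n : 2 * Real.pi * k / ε ≤ n := Nat.ceil_le.1 ((le_max_right _ _).trans hn)
  exact le_natCard_norm_dft_boxC_le d (by lia) hkn ((div_le_comm₀ hε hn₀).1 le_n)
end

section
/- Let d be a positive integer and let k₁,…,k_{d+1} be pairwise coprime integers, each at least 2. Define f : [0,2π]^d → ℝ by f(ω₁,…,ω_d) = (Σ_{j=1}^{d+1} Π_{ℓ=1}^{d} f_{k_j}(ω_ℓ)²)^{1/2}. Then f is strictly positive on all of [0,2π]^d, and hence its minimum M over the compact cube [0,2π]^d satisfies M > 0. -/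
/-- The periodic sinc `f_k : [0,2π] → ℝ`, `f_k(ω) = sin(kω/2)/(k sin(ω/2))` on `(0,2π)`,
extended continuously by `f_k(0) = f_k(2π) = 1`. -/
noncomputable def psinc (k : ℕ) (ω : ℝ) : ℝ :=
  if ω = 0 ∨ ω = 2 * Real.pi then 1 else Real.sin (k * ω / 2) / (k * Real.sin (ω / 2))

/-- `f(ω₁,…,ω_d) = (∑_{j=1}^{s} ∏_{ℓ=1}^{d} f_{k_j}(ω_ℓ)²)^{1/2}`. -/
noncomputable def fmulti (d s : ℕ) (k : Fin s → ℕ) (ω : Fin d → ℝ) : ℝ :=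
  Real.sqrt (∑ j, ∏ ℓ, psinc (k j) (ω ℓ) ^ 2)

/-!
At a point `ω` of `[0, 2π]`, the function `psinc k` vanishes exactly when the angle `ω` is a
nontrivial `k`-torsion element of the circle `ℝ / 2πℤ`. A nonzero element is not killed by two
coprime integers, so each coordinate of a point of the cube is a zero of at most one of the
functions `psinc (k j)`. With fewer coordinates than indices `j`, some product
`∏ ℓ, psinc (k j) (ω ℓ) ^ 2` therefore has no vanishing factor.
-/

open Real Set

theorem sin_half_eq_zero_iff_coe_angle_eq_zero {x : ℝ} : sin (x / 2) = 0 ↔ (x : Angle) = 0 := by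
  rw [sin_eq_zero_iff, Angle.coe_eq_zero_iff]
  refine exists_congr fun n => ?_
  rw [zsmul_eq_mul]
  constructor <;> intro h <;> linarith

theorem sin_half_eq_zero_iff_of_mem_Icc {x : ℝ} (hx : x ∈ Icc 0 (2 * π)) :
    sin (x / 2) = 0 ↔ x = 0 ∨ x = 2 * π := by
  refine ⟨fun h => ?_, ?_⟩
  · by_contra! hne
    have h_pos : 0 < x := hx.1.lt_of_ne' hne.1
    have h_lt : x < 2 * π := hx.2.lt_of_ne hne.2
    exact (sin_pos_of_pos_of_lt_pi (by linarith) (by linarith)).ne' h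
  · rintro (rfl | rfl) <;> simp

section

variable {k : ℕ} {ω : ℝ}

theorem psinc_eq_zero_iff (hk : k ≠ 0) (hω : ω ∈ Icc 0 (2 * π)) :
    psinc k ω = 0 ↔ (ω : Angle) ≠ 0 ∧ k • (ω : Angle) = 0 := by
  rw [psinc, ne_eq, ← Angle.natCast_mul_eq_nsmul, ← sin_half_eq_zero_iff_coe_angle_eq_zero,
    ← sin_half_eq_zero_iff_coe_angle_eq_zero]
  split_ifs with h <;> rw [← sin_half_eq_zero_iff_of_mem_Icc hω] at h <;> simp [h, hk]

theorem psinc_ne_zero_of_coprime {l : ℕ} (hk : k ≠ 0) (hl : l ≠ 0) (hkl : k.Coprime l)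
    (hω : ω ∈ Icc 0 (2 * π)) (h : psinc k ω = 0) : psinc l ω ≠ 0 := by
  intro h'
  obtain ⟨h_ne, hk_smul⟩ := (psinc_eq_zero_iff hk hω).1 h
  have hl_smul : l • (ω : Angle) = 0 := ((psinc_eq_zero_iff hl hω).1 h').2
  have h_gcd : k.gcd l • (ω : Angle) = 0 := gcd_nsmul_eq_zero.2 ⟨hk_smul, hl_smul⟩
  rw [hkl.gcd_eq_one, one_nsmul] at h_gcd
  exact h_ne h_gcd

theorem exists_forall_psinc_ne_zero {ι κ : Type*} [Fintype ι] [Fintype κ]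
    (hcard : Fintype.card κ < Fintype.card ι) {k : ι → ℕ} (hk : ∀ j, k j ≠ 0)
    (hcop : Pairwise fun i j => (k i).Coprime (k j)) {ω : κ → ℝ}
    (hω : ∀ ℓ, ω ℓ ∈ Icc 0 (2 * π)) : ∃ j, ∀ ℓ, psinc (k j) (ω ℓ) ≠ 0 := by
  by_contra! h
  choose g hg using h
  obtain ⟨i, j, hij, hgij⟩ := Fintype.exists_ne_map_eq_of_card_lt g hcard
  exact psinc_ne_zero_of_coprime (hk i) (hk j) (hcop hij) (hω (g i)) (hg i) (hgij ▸ hg j)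

-- The square matters: for even `k`, `sin (k * ω / 2) / (k * sin (ω / 2))` tends to `-1` at `2 * π`,
-- where `psinc k` is `1`.
theorem psinc_sq_eq_chebyshev_U_sq (hk : k ≠ 0) (hω : ω ∈ Icc 0 (2 * π)) :
    psinc k ω ^ 2 = ((Polynomial.Chebyshev.U ℝ (k - 1)).eval (cos (ω / 2)) / k) ^ 2 := by
  have hk' : (k : ℝ) ≠ 0 := Nat.cast_ne_zero.2 hk
  rw [psinc]
  split_ifs with h
  · obtain rfl | rfl := h
    · simp [hk']
    · rw [mul_div_cancel_left₀ _ two_ne_zero, cos_pi, Polynomial.Chebyshev.U_eval_neg_one]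
      obtain h_sign | h_sign := Int.units_eq_one_or (Int.negOnePow (k - 1)) <;>
        simp [hk', h_sign]
  · have h_sin : sin (ω / 2) ≠ 0 := mt (sin_half_eq_zero_iff_of_mem_Icc hω).1 h
    have h_cheb := Polynomial.Chebyshev.U_real_cos (ω / 2) (k - 1)
    push_cast at h_cheb
    rw [sub_add_cancel, ← mul_div_assoc] at h_cheb
    rw [← h_cheb, mul_div_mul_right _ _ h_sin]

theorem continuousOn_psinc_sq (hk : k ≠ 0) :
    ContinuousOn (fun ω => psinc k ω ^ 2) (Icc 0 (2 * π)) := by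
  refine ContinuousOn.congr ?_ fun ω hω => psinc_sq_eq_chebyshev_U_sq hk hω
  fun_prop

end

section

variable {d s : ℕ} {k : Fin s → ℕ}

theorem fmulti_pos (hds : d < s) (hk : ∀ j, k j ≠ 0)
    (hcop : Pairwise fun i j => (k i).Coprime (k j)) {ω : Fin d → ℝ}
    (hω : ∀ ℓ, ω ℓ ∈ Icc 0 (2 * π)) : 0 < fmulti d s k ω := by
  obtain ⟨j, hj⟩ := exists_forall_psinc_ne_zero (by simpa using hds) hk hcop hω
  refine sqrt_pos.2 (Finset.sum_pos' (fun i _ => by positivity) ⟨j, Finset.mem_univ j, ?_⟩)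
  exact Finset.prod_pos fun ℓ _ => sq_pos_of_ne_zero (hj ℓ)

theorem continuousOn_fmulti (hk : ∀ j, k j ≠ 0) :
    ContinuousOn (fmulti d s k) {ω | ∀ ℓ, ω ℓ ∈ Icc 0 (2 * π)} := by
  refine ContinuousOn.sqrt <| continuousOn_finsetSum _ fun j _ =>
    continuousOn_finsetProd _ fun ℓ _ => ?_
  exact (continuousOn_psinc_sq (hk j)).comp (continuous_apply ℓ).continuousOn fun ω hω => hω ℓ

theorem exists_isLeast_fmulti_image (hk : ∀ j, k j ≠ 0) :
    ∃ M, IsLeast (fmulti d s k '' {ω | ∀ ℓ, ω ℓ ∈ Icc 0 (2 * π)}) M := by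
  have h_compact : IsCompact {ω : Fin d → ℝ | ∀ ℓ, ω ℓ ∈ Icc 0 (2 * π)} :=
    isCompact_pi_infinite fun _ => isCompact_Icc
  have h_nonempty : {ω : Fin d → ℝ | ∀ ℓ, ω ℓ ∈ Icc 0 (2 * π)}.Nonempty :=
    ⟨0, fun _ => left_mem_Icc.2 two_pi_pos.le⟩
  exact (h_compact.image_of_continuousOn (continuousOn_fmulti hk)).exists_isLeast
    (h_nonempty.image _)

theorem stmt14_general (hds : d < s) (hk : ∀ j, k j ≠ 0)
    (hcop : Pairwise fun i j => (k i).Coprime (k j)) :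
    (∀ ω : Fin d → ℝ, (∀ ℓ, ω ℓ ∈ Icc 0 (2 * π)) → 0 < fmulti d s k ω) ∧
    ∃ M : ℝ, 0 < M ∧ IsLeast (fmulti d s k '' {ω | ∀ ℓ, ω ℓ ∈ Icc 0 (2 * π)}) M := by
  refine ⟨fun ω => fmulti_pos hds hk hcop, ?_⟩
  obtain ⟨_, ⟨ω, hω, rfl⟩, h_min⟩ := exists_isLeast_fmulti_image (d := d) hk
  exact ⟨_, fmulti_pos hds hk hcop hω, mem_image_of_mem _ hω, h_min⟩

end

theorem stmt14 (d : ℕ) (hd : 0 < d) (k : Fin (d + 1) → ℕ) (hk2 : ∀ j, 2 ≤ k j)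
    (hcop : ∀ i j, i ≠ j → Nat.Coprime (k i) (k j)) :
    (∀ ω : Fin d → ℝ, (∀ ℓ, ω ℓ ∈ Set.Icc 0 (2 * Real.pi)) → 0 < fmulti d (d + 1) k ω) ∧
    ∃ M : ℝ, 0 < M ∧
      IsLeast (fmulti d (d + 1) k '' {ω | ∀ ℓ, ω ℓ ∈ Set.Icc 0 (2 * Real.pi)}) M :=
  stmt14_general d.lt_succ_self (fun j => Nat.ne_zero_of_lt (hk2 j)) fun i j => hcop i j
end

section
/- Let d be a positive integer and let k₁,…,k_{d+1} be pairwise coprime integers, each at least 2. For each n ≥ max_j k_j let T_n : ℂ^{(ℤ/nℤ)^d} → (ℂ^{(ℤ/nℤ)^d})^{d+1} be the stacked cyclic-convolution map T_n(u) = (u ⊛ b_{k₁}, …, u ⊛ b_{k_{d+1}}). Then there exists a constant c > 0, independent of n, such that for all such n and all u ∈ ℂ^{(ℤ/nℤ)^d}: c·‖u‖ ≤ ‖T_n u‖ ≤ √(d+1)·‖u‖ (Euclidean norms). In particular, each T_n is injective and the condition number of T_n (largest singular value divided by smallest singular value) is at most √(d+1)/c for all n. -/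
open scoped BigOperators

/-- The Euclidean (`ℓ²`) norm of a finitely-indexed complex vector. -/
noncomputable def l2norm {ι : Type*} [Fintype ι] (u : ι → ℂ) : ℝ :=
  Real.sqrt (∑ t, ‖u t‖ ^ 2)

/-- The stacked cyclic-convolution map `T(u) = (u ⊛ b_{k₁}, …, u ⊛ b_{k_s})`. -/
noncomputable def stacked (n d s : ℕ) (k : Fin s → ℕ) (u : (Fin d → Fin n) → ℂ) :
    Fin s × (Fin d → Fin n) → ℂ :=
  fun p => cconv n d (boxC n (k p.1) d) u p.2

/-- The set of norms `‖T u‖` over unit vectors `u`; its `sSup` and `sInf` are the largest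
and smallest singular values of the stacked map `T`. -/
noncomputable def singVals (n d s : ℕ) (k : Fin s → ℕ) : Set ℝ :=
  {r | ∃ u : (Fin d → Fin n) → ℂ, l2norm u = 1 ∧ r = l2norm (stacked n d s k u)}

/-!
Up to the factor `k⁻ᵈ`, convolution with the box filter of size `k` is the polynomial
`B = ∏ₗ (1 + Xₗ + ⋯ + Xₗᵏ⁻¹)` evaluated at the coordinate translations of `(ℤ/nℤ)ᵈ`. For coprime
`a` and `b` the Euclidean algorithm shows that the geometric sums of lengths `a` and `b` in one
variable generate the unit ideal. A maximal ideal containing all the polynomials `Bⱼ` would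
contain, for each filter, a geometric sum in one of the `d` variables; with more than `d` filters
two of these share their variable, which is absurd. Hence `∑ⱼ gⱼ Bⱼ = 1` for polynomials `gⱼ` that
do not depend on `n`. Translations are isometries, so `gⱼ` acts with operator norm at most the
`ℓ¹` norm of its coefficients, and applying the identity to `u` bounds `‖u‖` by a multiple of
`‖T u‖` uniformly in `n`.
-/

open Finset Function

section UnitIdeal

theorem geom_sum_dvd_geom_sum_mul {R : Type*} [Semiring R] (x : R) (a q : ℕ) :
    ∑ i ∈ range a, x ^ i ∣ ∑ i ∈ range (a * q), x ^ i := by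
  induction q with
  | zero => simp
  | succ q ih =>
    rw [Nat.mul_succ, sum_range_add]
    simp only [add_comm (a * q), pow_add, ← sum_mul]
    exact dvd_add ih (dvd_mul_right _ _)

variable {R : Type*} [CommRing R]

theorem isCoprime_geom_sum_of_coprime (x : R) {a b : ℕ} (hab : a.Coprime b) :
    IsCoprime (∑ i ∈ range a, x ^ i) (∑ i ∈ range b, x ^ i) := by
  induction a, b using Nat.gcd.induction with
  | H0 b =>
    obtain rfl : b = 1 := by simpa using hab
    simpa using isCoprime_one_right
  | H1 a b _ ih =>
    have hmod : IsCoprime (∑ i ∈ range a, x ^ i) (∑ i ∈ range (b % a), x ^ i) :=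
      (ih (by rwa [Nat.Coprime, ← Nat.gcd_rec])).symm
    obtain ⟨c, hc⟩ := geom_sum_dvd_geom_sum_mul x a (b / a)
    rw [← Nat.mod_add_div b a, sum_range_add]
    simp only [pow_add, ← mul_sum, hc, mul_left_comm _ (∑ i ∈ range a, x ^ i)]
    exact hmod.add_mul_left_right _

theorem span_range_prod_eq_top_of_card_lt {ι κ : Type*} [Fintype ι] [Fintype κ]
    (hcard : Fintype.card ι < Fintype.card κ) {a : κ → ι → R}
    (ha : ∀ l, Pairwise (IsCoprime on fun j => a j l)) :
    Ideal.span (Set.range fun j => ∏ l, a j l) = ⊤ := by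
  by_contra h
  obtain ⟨M, hM, hle⟩ := Ideal.exists_le_maximal _ h
  have hfactor (j : κ) : ∃ l, a j l ∈ M := by
    have hprod : ∏ l, a j l ∈ M := hle (Ideal.subset_span (Set.mem_range_self j))
    simpa using hM.isPrime.prod_mem_iff.1 hprod
  choose f hf using hfactor
  obtain ⟨i, j, hij, hfij⟩ := Fintype.exists_ne_map_eq_of_card_lt f hcard
  exact hM.isPrime.notMem_of_isCoprime_of_mem (ha (f i) hij) (hf i) (hfij ▸ hf j)

end UnitIdeal

section BoxPolynomial

variable {R ι : Type*} [Fintype ι] [DecidableEq ι]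

variable (R ι) in
/-- The sum of all monomials with exponents in `{0,…,k-1}^ι`: the generating polynomial of the box
filter of size `k`, without its normalization. Polynomials in variables indexed by `ι` are elements
of `AddMonoidAlgebra R (ι → ℕ)`, so that exponents are plain functions. -/
noncomputable def boxPoly [Semiring R] (k : ℕ) : AddMonoidAlgebra R (ι → ℕ) :=
  ∑ p ∈ Fintype.piFinset fun _ : ι => range k, AddMonoidAlgebra.single p 1

theorem boxPoly_eq_prod_geom_sum [CommSemiring R] (k : ℕ) :
    boxPoly R ι k = ∏ l, ∑ i ∈ range k, AddMonoidAlgebra.single (Pi.single l 1) 1 ^ i := by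
  rw [prod_univ_sum, boxPoly]
  refine sum_congr rfl fun p _ => ?_
  simp only [AddMonoidAlgebra.single_pow, AddMonoidAlgebra.prod_single, one_pow, prod_const_one]
  congr 1
  ext l
  simp [Finset.sum_apply, Pi.single_apply]

theorem exists_sum_mul_boxPoly_eq_one [CommRing R] {κ : Type*} [Fintype κ]
    (hcard : Fintype.card ι < Fintype.card κ) {k : κ → ℕ} (hk : Pairwise (Nat.Coprime on k)) :
    ∃ g : κ → AddMonoidAlgebra R (ι → ℕ), ∑ j, g j * boxPoly R ι (k j) = 1 := by
  rw [← Ideal.mem_span_range_iff_exists_fun, ← Ideal.eq_top_iff_one]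
  simp only [boxPoly_eq_prod_geom_sum]
  exact span_range_prod_eq_top_of_card_lt hcard fun l i j hij =>
    isCoprime_geom_sum_of_coprime _ (hk hij)

end BoxPolynomial

section EuclideanNorm

variable {ι κ : Type*} [Fintype ι] [Fintype κ]

theorem l2norm_eq_norm_toLp (u : ι → ℂ) : l2norm u = ‖WithLp.toLp 2 u‖ :=
  (EuclideanSpace.norm_eq _).symm

theorem l2norm_nonneg (u : ι → ℂ) : 0 ≤ l2norm u := Real.sqrt_nonneg _

theorem l2norm_eq_zero {u : ι → ℂ} : l2norm u = 0 ↔ u = 0 := by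
  rw [l2norm_eq_norm_toLp, norm_eq_zero, WithLp.toLp_eq_zero]

theorem l2norm_smul (a : ℂ) (u : ι → ℂ) : l2norm (a • u) = ‖a‖ * l2norm u := by
  simp only [l2norm_eq_norm_toLp, WithLp.toLp_smul, norm_smul]

theorem l2norm_sum_le {α : Type*} (s : Finset α) (f : α → ι → ℂ) :
    l2norm (∑ a ∈ s, f a) ≤ ∑ a ∈ s, l2norm (f a) := by
  simp only [l2norm_eq_norm_toLp, WithLp.toLp_sum]
  exact norm_sum_le _ _

theorem l2norm_comp_equiv (e : ι ≃ κ) (u : κ → ℂ) : l2norm (u ∘ e) = l2norm u :=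
  congrArg Real.sqrt (e.sum_comp fun t => ‖u t‖ ^ 2)

theorem l2norm_single_one [DecidableEq ι] (i : ι) : l2norm (Pi.single i 1 : ι → ℂ) = 1 := by
  rw [l2norm_eq_norm_toLp, PiLp.toLp_single, PiLp.norm_single, norm_one]

theorem sq_l2norm_prod (v : κ × ι → ℂ) :
    l2norm v ^ 2 = ∑ j, l2norm (fun t => v (j, t)) ^ 2 := by
  simp only [l2norm]
  rw [Real.sq_sqrt (by positivity), Fintype.sum_prod_type]
  exact sum_congr rfl fun j _ => (Real.sq_sqrt (by positivity)).symm

theorem l2norm_slice_le (v : κ × ι → ℂ) (j : κ) : l2norm (fun t => v (j, t)) ≤ l2norm v := by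
  refine le_of_sq_le_sq ?_ (l2norm_nonneg v)
  rw [sq_l2norm_prod]
  exact single_le_sum (f := fun j => l2norm (fun t => v (j, t)) ^ 2)
    (fun _ _ => sq_nonneg _) (mem_univ j)

theorem l2norm_le_sqrt_card_mul {v : κ × ι → ℂ} {C : ℝ} (hC : 0 ≤ C)
    (hv : ∀ j, l2norm (fun t => v (j, t)) ≤ C) : l2norm v ≤ √(Fintype.card κ) * C := by
  refine le_of_sq_le_sq ?_ (by positivity)
  calc l2norm v ^ 2 = ∑ j, l2norm (fun t => v (j, t)) ^ 2 := sq_l2norm_prod v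
    _ ≤ ∑ _j : κ, C ^ 2 := sum_le_sum fun j _ => pow_le_pow_left₀ (l2norm_nonneg _) (hv j) 2
    _ = (√(Fintype.card κ) * C) ^ 2 := by
      rw [mul_pow, Real.sq_sqrt (Nat.cast_nonneg _), sum_const, nsmul_eq_mul, card_univ]

end EuclideanNorm

section Translation

variable {M H : Type*}

/-- The `ℓ¹` norm of the coefficients, which bounds the operator norm of the action of `f` by
translations. -/
noncomputable def coeffL1Norm (f : AddMonoidAlgebra ℂ M) : ℝ := f.coeff.sum fun _ a => ‖a‖

theorem coeffL1Norm_nonneg (f : AddMonoidAlgebra ℂ M) : 0 ≤ coeffL1Norm f :=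
  sum_nonneg fun _ _ => norm_nonneg _

variable [AddMonoid M] [AddCommGroup H]

/-- The translations of functions on `H` by the elements `φ m`, `m : M`, as a representation. -/
def translation (φ : M →+ H) : Multiplicative M →* Module.End ℂ (H → ℂ) where
  toFun m := LinearMap.funLeft ℂ ℂ fun t => t - φ m.toAdd
  map_one' := by ext; simp [LinearMap.funLeft]
  map_mul' a b := by ext; simp [LinearMap.funLeft, sub_sub]

theorem translation_apply (φ : M →+ H) (m : Multiplicative M) (u : H → ℂ) (t : H) :
    translation φ m u t = u (t - φ m.toAdd) := rfl

/-- The linear extension of `translation φ` to the monoid algebra: an element `f` acts on functions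
on `H` as convolution with its push-forward along `φ`. -/
noncomputable def translationAction (φ : M →+ H) :
    AddMonoidAlgebra ℂ M →ₐ[ℂ] Module.End ℂ (H → ℂ) :=
  AddMonoidAlgebra.lift ℂ _ M (translation φ)

theorem translationAction_sum_single (φ : M →+ H) (S : Finset M) (u : H → ℂ) :
    translationAction φ (∑ p ∈ S, AddMonoidAlgebra.single p 1) u =
      ∑ p ∈ S, translation φ (.ofAdd p) u := by
  simp [translationAction]

variable [Fintype H]

theorem l2norm_translation (φ : M →+ H) (m : Multiplicative M) (u : H → ℂ) :
    l2norm (translation φ m u) = l2norm u :=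
  l2norm_comp_equiv (Equiv.subRight (φ m.toAdd)) u

theorem l2norm_translationAction_le (φ : M →+ H) (f : AddMonoidAlgebra ℂ M) (u : H → ℂ) :
    l2norm (translationAction φ f u) ≤ coeffL1Norm f * l2norm u := by
  rw [translationAction, AddMonoidAlgebra.lift_apply, Finsupp.sum, LinearMap.sum_apply,
    coeffL1Norm, Finsupp.sum, sum_mul]
  refine (l2norm_sum_le _ _).trans_eq (sum_congr rfl fun m _ => ?_)
  rw [LinearMap.smul_apply, l2norm_smul, l2norm_translation]

theorem l2norm_le_sum_coeffL1Norm_mul {κ : Type*} [Fintype κ] {f g : κ → AddMonoidAlgebra ℂ M}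
    (hgf : ∑ j, g j * f j = 1) (φ : M →+ H) (u : H → ℂ) :
    l2norm u ≤ ∑ j, coeffL1Norm (g j) * l2norm (translationAction φ (f j) u) := by
  have hu : u = ∑ j, translationAction φ (g j) (translationAction φ (f j) u) := by
    simpa using congrArg (translationAction φ · u) hgf.symm
  calc l2norm u = l2norm (∑ j, translationAction φ (g j) (translationAction φ (f j) u)) :=
        congrArg l2norm hu
    _ ≤ ∑ j, l2norm (translationAction φ (g j) (translationAction φ (f j) u)) := l2norm_sum_le _ _
    _ ≤ ∑ j, coeffL1Norm (g j) * l2norm (translationAction φ (f j) u) :=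
      sum_le_sum fun j _ => l2norm_translationAction_le φ (g j) _

end Translation

section BoxFilter

variable {n d : ℕ}

open Fin.NatCast in
/-- Coordinatewise reduction modulo `n`, from the exponents of polynomials to `(ℤ/nℤ)^d`. -/
def reduceMod (n d : ℕ) [NeZero n] : (Fin d → ℕ) →+ (Fin d → Fin n) :=
  (Nat.castAddMonoidHom (Fin n)).compLeft (Fin d)

variable [NeZero n]

theorem val_reduceMod (p : Fin d → ℕ) (l : Fin d) : (reduceMod n d p l : ℕ) = p l % n := rfl

theorem sum_filter_val_lt_eq_sum_reduceMod {A : Type*} [AddCommMonoid A] {k : ℕ} (hk : k ≤ n)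
    (f : (Fin d → Fin n) → A) :
    ∑ t with ∀ l, (t l : ℕ) < k, f t =
      ∑ p ∈ Fintype.piFinset fun _ => range k, f (reduceMod n d p) := by
  have reduceMod_val (t : Fin d → Fin n) : reduceMod n d (fun l => t l) = t := by
    ext l
    rw [val_reduceMod, Nat.mod_eq_of_lt (t l).is_lt]
  have val_reduceMod_of_mem {p : Fin d → ℕ} (hp : p ∈ Fintype.piFinset fun _ => range k)
      (l : Fin d) : (reduceMod n d p l : ℕ) = p l :=
    Nat.mod_eq_of_lt ((mem_range.1 (Fintype.mem_piFinset.1 hp l)).trans_le hk)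
  refine sum_nbij' (fun t l => t l) (reduceMod n d) ?_ ?_ ?_ ?_ ?_
  · simp
  · intro p hp
    simpa [val_reduceMod_of_mem hp] using hp
  · exact fun t _ => reduceMod_val t
  · exact fun p hp => funext (val_reduceMod_of_mem hp)
  · exact fun t _ => congrArg f (reduceMod_val t).symm

theorem cconv_boxC_eq_smul_sum_translation {k : ℕ} (hk : k ≤ n) (u : (Fin d → Fin n) → ℂ) :
    cconv n d (boxC n k d) u = (1 / (k : ℂ) ^ d) •
      ∑ p ∈ Fintype.piFinset fun _ => range k, translation (reduceMod n d) (.ofAdd p) u := by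
  funext t
  simp only [cconv, boxC, Pi.smul_apply, Finset.sum_apply, smul_eq_mul, ite_mul, zero_mul,
    translation_apply, toAdd_ofAdd]
  rw [← sum_filter, ← mul_sum, sum_filter_val_lt_eq_sum_reduceMod hk]
  rfl

theorem translationAction_boxPoly {k : ℕ} (hk : 0 < k) (hkn : k ≤ n) (u : (Fin d → Fin n) → ℂ) :
    translationAction (reduceMod n d) (boxPoly ℂ (Fin d) k) u =
      (k : ℂ) ^ d • cconv n d (boxC n k d) u := by
  have hk0 : (k : ℂ) ^ d ≠ 0 := pow_ne_zero _ (Nat.cast_ne_zero.2 hk.ne')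
  rw [boxPoly, translationAction_sum_single, cconv_boxC_eq_smul_sum_translation hkn, smul_smul,
    mul_one_div_cancel hk0, one_smul]

theorem l2norm_cconv_boxC_le {k : ℕ} (hk : k ≤ n) (u : (Fin d → Fin n) → ℂ) :
    l2norm (cconv n d (boxC n k d) u) ≤ l2norm u := by
  rw [cconv_boxC_eq_smul_sum_translation hk, l2norm_smul]
  calc ‖1 / (k : ℂ) ^ d‖ *
        l2norm (∑ p ∈ Fintype.piFinset fun _ => range k, translation (reduceMod n d) (.ofAdd p) u)
      ≤ ‖1 / (k : ℂ) ^ d‖ *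
        ∑ p ∈ Fintype.piFinset fun _ => range k,
          l2norm (translation (reduceMod n d) (.ofAdd p) u) := by
        gcongr
        exact l2norm_sum_le _ _
    _ = (k : ℝ) ^ d / (k : ℝ) ^ d * l2norm u := by
        simp only [one_div, norm_inv, norm_pow, RCLike.norm_natCast, l2norm_translation, sum_const,
          Fintype.card_piFinset_const, card_range, nsmul_eq_mul, Nat.cast_pow]
        ring
    _ ≤ l2norm u := mul_le_of_le_one_left (l2norm_nonneg u) (div_self_le_one _)

end BoxFilter

section StackedFilters

variable {d s : ℕ} {k : Fin s → ℕ}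

theorem l2norm_stacked_le {n : ℕ} [NeZero n] (hkn : ∀ j, k j ≤ n) (u : (Fin d → Fin n) → ℂ) :
    l2norm (stacked n d s k u) ≤ √s * l2norm u := by
  have hslice (j : Fin s) : l2norm (fun t => stacked n d s k u (j, t)) ≤ l2norm u :=
    l2norm_cconv_boxC_le (hkn j) u
  simpa only [Fintype.card_fin] using l2norm_le_sqrt_card_mul (l2norm_nonneg u) hslice

theorem exists_pos_forall_mul_l2norm_le_stacked (hds : d < s) (hk : ∀ j, 0 < k j)
    (hcop : Pairwise (Nat.Coprime on k)) :
    ∃ c : ℝ, 0 < c ∧ ∀ (n : ℕ) [NeZero n], (∀ j, k j ≤ n) → ∀ u : (Fin d → Fin n) → ℂ,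
      c * l2norm u ≤ l2norm (stacked n d s k u) := by
  obtain ⟨g, hg⟩ := exists_sum_mul_boxPoly_eq_one (R := ℂ) (ι := Fin d) (by simpa using hds) hcop
  set C : ℝ := ∑ j, coeffL1Norm (g j) * (k j : ℝ) ^ d
  have hC : 0 ≤ C := sum_nonneg fun j _ => mul_nonneg (coeffL1Norm_nonneg _) (by positivity)
  refine ⟨(C + 1)⁻¹, by positivity, fun n _ hkn u => ?_⟩
  rw [inv_mul_le_iff₀ (by positivity)]
  calc l2norm u
      ≤ ∑ j, coeffL1Norm (g j) *
          l2norm (translationAction (reduceMod n d) (boxPoly ℂ (Fin d) (k j)) u) :=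
        l2norm_le_sum_coeffL1Norm_mul hg _ u
    _ = ∑ j, coeffL1Norm (g j) * ((k j : ℝ) ^ d * l2norm (cconv n d (boxC n (k j) d) u)) := by
        simp [translationAction_boxPoly, hk, hkn, l2norm_smul]
    _ ≤ ∑ j, coeffL1Norm (g j) * ((k j : ℝ) ^ d * l2norm (stacked n d s k u)) := by
        gcongr with j
        · exact coeffL1Norm_nonneg _
        · exact l2norm_slice_le (stacked n d s k u) j
    _ = C * l2norm (stacked n d s k u) := by simp only [C, sum_mul, mul_assoc]
    _ ≤ (C + 1) * l2norm (stacked n d s k u) := by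
        gcongr
        · exact l2norm_nonneg _
        · exact le_add_of_nonneg_right zero_le_one

variable {n : ℕ}

theorem stacked_sub (u v : (Fin d → Fin n) → ℂ) :
    stacked n d s k (u - v) = stacked n d s k u - stacked n d s k v := by
  funext p
  simp [stacked, cconv, mul_sub, sum_sub_distrib]

theorem stacked_injective_of_mul_l2norm_le {c : ℝ} (hc : 0 < c)
    (hlower : ∀ u, c * l2norm u ≤ l2norm (stacked n d s k u)) : Injective (stacked n d s k) := by
  intro u v huv
  have hle : c * l2norm (u - v) ≤ 0 := by
    simpa [stacked_sub, huv, l2norm_eq_zero.2] using hlower (u - v)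
  have hzero : l2norm (u - v) = 0 :=
    (nonpos_of_mul_nonpos_right hle hc).antisymm (l2norm_nonneg _)
  exact sub_eq_zero.1 (l2norm_eq_zero.1 hzero)

theorem sSup_singVals_div_sInf_singVals_le [NeZero n] {c C : ℝ} (hc : 0 < c)
    (hlower : ∀ u, c * l2norm u ≤ l2norm (stacked n d s k u))
    (hupper : ∀ u, l2norm (stacked n d s k u) ≤ C * l2norm u) :
    sSup (singVals n d s k) / sInf (singVals n d s k) ≤ C / c := by
  have hne : (singVals n d s k).Nonempty := ⟨_, Pi.single 0 1, l2norm_single_one 0, rfl⟩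
  have hmem : ∀ r ∈ singVals n d s k, c ≤ r ∧ r ≤ C := by
    rintro _ ⟨u, hu, rfl⟩
    exact ⟨by simpa [hu] using hlower u, by simpa [hu] using hupper u⟩
  obtain ⟨r, hr⟩ := hne
  have hC : 0 ≤ C := hc.le.trans ((hmem r hr).1.trans (hmem r hr).2)
  exact div_le_div₀ hC (csSup_le ⟨r, hr⟩ fun r hr => (hmem r hr).2) hc
    (le_csInf ⟨r, hr⟩ fun r hr => (hmem r hr).1)

end StackedFilters

theorem stmt15_general {d s : ℕ} (hds : d < s) (k : Fin s → ℕ) (hk : ∀ j, 0 < k j)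
    (hcop : Pairwise (Nat.Coprime on k)) :
    ∃ c : ℝ, 0 < c ∧ ∀ n : ℕ, (∀ j, k j ≤ n) →
      (∀ u : (Fin d → Fin n) → ℂ,
        c * l2norm u ≤ l2norm (stacked n d s k u) ∧
        l2norm (stacked n d s k u) ≤ √s * l2norm u) ∧
      Injective (stacked n d s k) ∧
      sSup (singVals n d s k) / sInf (singVals n d s k) ≤ √s / c := by
  obtain ⟨c, hc, hlower⟩ := exists_pos_forall_mul_l2norm_le_stacked hds hk hcop
  refine ⟨c, hc, fun n hkn => ?_⟩
  let j₀ : Fin s := ⟨d, hds⟩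
  have : NeZero n := ⟨((hk j₀).trans_le (hkn j₀)).ne'⟩
  exact ⟨fun u => ⟨hlower n hkn u, l2norm_stacked_le hkn u⟩,
    stacked_injective_of_mul_l2norm_le hc (hlower n hkn),
    sSup_singVals_div_sInf_singVals_le hc (hlower n hkn) (l2norm_stacked_le hkn)⟩

theorem stmt15 (d : ℕ) (hd : 0 < d) (k : Fin (d + 1) → ℕ) (hk2 : ∀ j, 2 ≤ k j)
    (hcop : ∀ i j, i ≠ j → Nat.Coprime (k i) (k j)) :
    ∃ c : ℝ, 0 < c ∧ ∀ n : ℕ, (∀ j, k j ≤ n) →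
      (∀ u : (Fin d → Fin n) → ℂ,
        c * l2norm u ≤ l2norm (stacked n d (d + 1) k u) ∧
        l2norm (stacked n d (d + 1) k u) ≤ Real.sqrt (d + 1) * l2norm u) ∧
      Function.Injective (stacked n d (d + 1) k) ∧
      sSup (singVals n d (d + 1) k) / sInf (singVals n d (d + 1) k) ≤
        Real.sqrt (d + 1) / c := by
  simpa using stmt15_general d.lt_succ_self k (fun j => two_pos.trans_le (hk2 j)) (hcop · ·)
end

section
/- Let d be a positive integer, let k₁,…,k_{d+1} be pairwise coprime integers, each at least 2, and set k = min_j k_j. Define f : [0,2π]^d → ℝ by f(ω₁,…,ω_d) = (Σ_{j=1}^{d+1} Π_{ℓ=1}^{d} f_{k_j}(ω_ℓ)²)^{1/2}. Then (2π)^{−d} ∫_{[0,2π]^d} f(ω₁,…,ω_d)^{−2} dω₁⋯dω_d ≥ k^d/(d+1). -/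
/-!
Write `z = exp (iω)`. Since `|z - 1| = 2 |sin (ω / 2)|`, the geometric sum gives
`f_k(ω)² = |1 + z + ⋯ + z^(k-1)|² / k²`, a normalised Fejér kernel, whose average over a period
is `1 / k` by Parseval. Hence `f²` has average `∑ j, k_j⁻ᵈ` over the box, and the bound is the
inequality between harmonic and arithmetic means for `f²`.

The harmonic mean requires `f² > 0`: if `f(ω) = 0`, each of the more than `d` kernels vanishes at
one of the `d` coordinates, so two of them vanish at the same coordinate. This makes `z` a common
zero of two geometric sums of coprime lengths, hence `z = 1`, which is not a zero of either.
-/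

open MeasureTheory Set

theorem geom_sum_ne_zero_of_coprime {R : Type*} [Ring R] [CharZero R] {a b : ℕ}
    (hab : a.Coprime b) (ha : a ≠ 0) {z : R} (hb : ∑ n ∈ Finset.range b, z ^ n = 0) :
    ∑ n ∈ Finset.range a, z ^ n ≠ 0 := by
  intro h
  have pow_eq_one {m : ℕ} (hm : ∑ n ∈ Finset.range m, z ^ n = 0) : z ^ m = 1 := by
    rw [← sub_eq_zero, ← geom_sum_mul, hm, zero_mul]
  have hz : z = 1 := (pow_eq_one_iff_of_coprime hab).1 ⟨pow_eq_one h, pow_eq_one hb⟩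
  rw [hz, one_geom_sum, Nat.cast_eq_zero] at h
  exact ha h

theorem norm_geom_sum_exp_mul_abs_sin (k : ℕ) (x : ℝ) :
    ‖∑ n ∈ Finset.range k, Complex.exp (Complex.I * x) ^ n‖ * |Real.sin (x / 2)| =
      |Real.sin (k * x / 2)| := by
  have hpow : Complex.exp (Complex.I * x) ^ k = Complex.exp (Complex.I * (k * x : ℝ)) := by
    rw [← Complex.exp_nat_mul]
    push_cast
    ring_nf
  have h := congrArg norm (geom_sum_mul (Complex.exp (Complex.I * x)) k)
  rw [hpow, norm_mul, Complex.norm_exp_I_mul_ofReal_sub_one,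
    Complex.norm_exp_I_mul_ofReal_sub_one, Real.norm_eq_abs, Real.norm_eq_abs, abs_mul, abs_mul,
    abs_two] at h
  linarith

/-- The Fejér kernel of order `k`, normalised to take the value `1` (rather than `k`) at `0`. It is
the square of the periodic sinc, in a form that is visibly continuous and periodic. -/
noncomputable def fejerKernel (k : ℕ) (x : ℝ) : ℝ :=
  ‖∑ n ∈ Finset.range k, Complex.exp (Complex.I * x) ^ n‖ ^ 2 / k ^ 2

@[fun_prop]
theorem continuous_fejerKernel (k : ℕ) : Continuous (fejerKernel k) := by
  unfold fejerKernel
  fun_prop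

theorem fejerKernel_nonneg (k : ℕ) (x : ℝ) : 0 ≤ fejerKernel k x := by
  unfold fejerKernel
  positivity

theorem fejerKernel_eq_zero_iff {k : ℕ} (hk : k ≠ 0) {x : ℝ} :
    fejerKernel k x = 0 ↔ ∑ n ∈ Finset.range k, Complex.exp (Complex.I * x) ^ n = 0 := by
  simp [fejerKernel, hk]

theorem psinc_sq_eq_fejerKernel {k : ℕ} (hk : k ≠ 0) {x : ℝ} (hx : x ∈ Icc 0 (2 * Real.pi)) :
    psinc k x ^ 2 = fejerKernel k x := by
  unfold psinc fejerKernel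
  split_ifs with h
  · have hexp : Complex.exp (Complex.I * x) = 1 := by
      rcases h with rfl | rfl
      · simp
      · simpa [mul_comm] using Complex.exp_two_pi_mul_I
    simp [hexp, hk]
  · obtain ⟨h0, h2π⟩ := not_or.1 h
    have hsin : 0 < Real.sin (x / 2) :=
      Real.sin_pos_of_pos_of_lt_pi (by linarith [hx.1.lt_of_ne' h0])
        (by linarith [hx.2.lt_of_ne h2π])
    rw [← sq_abs (_ / _), abs_div, ← norm_geom_sum_exp_mul_abs_sin, abs_mul, Nat.abs_cast,
      mul_div_mul_right _ _ (abs_pos_of_pos hsin).ne', div_pow]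

theorem circleAverage_norm_geom_sum_sq (k : ℕ) :
    Real.circleAverage (fun z : ℂ ↦ ‖∑ n ∈ Finset.range k, z ^ n‖ ^ 2) 0 1 = k := by
  have hcoeff (i : ℕ) :
      (∑ n ∈ Finset.range k, (Polynomial.X : Polynomial ℂ) ^ n).coeff i =
        if i < k then 1 else 0 := by
    simp [Polynomial.finsetSum_coeff, Polynomial.coeff_X_pow]
  have hsupp :
      (∑ n ∈ Finset.range k, (Polynomial.X : Polynomial ℂ) ^ n).support = Finset.range k := by
    ext i
    simp [Polynomial.mem_support_iff, hcoeff]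
  have parseval :=
    (∑ n ∈ Finset.range k, (Polynomial.X : Polynomial ℂ) ^ n).sum_sq_norm_coeff_eq_circleAverage
  simp only [Polynomial.eval_geom_sum] at parseval
  rw [← parseval, hsupp, Finset.sum_congr rfl fun i hi ↦ by
    rw [hcoeff, if_pos (Finset.mem_range.1 hi), norm_one, one_pow]]
  simp

theorem average_fejerKernel (k : ℕ) :
    ⨍ x in Icc 0 (2 * Real.pi), fejerKernel k x = (k : ℝ)⁻¹ := by
  have h := circleAverage_norm_geom_sum_sq k
  simp only [Real.circleAverage_eq_intervalAverage, uIoc_of_le Real.two_pi_pos.le,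
    setAverage_congr Ioc_ae_eq_Icc, circleMap, Complex.ofReal_one, one_mul, zero_add,
    mul_comm _ Complex.I] at h
  simp only [fejerKernel]
  rw [average, integral_div, ← average_eq', h, sq, div_self_mul_self']

theorem setAverage_pi_prod {ι 𝕜 : Type*} [Fintype ι] [RCLike 𝕜] {E : ι → Type*}
    [∀ i, MeasurableSpace (E i)] (μ : ∀ i, Measure (E i)) [∀ i, SigmaFinite (μ i)]
    (s : ∀ i, Set (E i)) (f : ∀ i, E i → 𝕜) :
    ⨍ x in univ.pi s, ∏ i, f i (x i) ∂Measure.pi μ = ∏ i, ⨍ x in s i, f i x ∂μ i := by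
  simp only [setAverage_eq, RCLike.real_smul_eq_coe_mul, Finset.prod_mul_distrib]
  rw [measureReal_def, Measure.pi_pi, ENNReal.toReal_prod, Measure.restrict_pi_pi,
    integral_fintype_prod_eq_prod, ← Finset.prod_inv_distrib, RCLike.ofReal_prod]
  rfl

theorem inv_average_le_average_inv {α : Type*} [MeasurableSpace α] {μ : Measure α}
    [IsFiniteMeasure μ] {f : α → ℝ} (hpos : ∀ᵐ x ∂μ, 0 < f x) (hf : Integrable f μ)
    (hf_inv : Integrable (fun x ↦ (f x)⁻¹) μ) :
    (⨍ x, f x ∂μ)⁻¹ ≤ ⨍ x, (f x)⁻¹ ∂μ := by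
  rcases eq_or_ne μ 0 with rfl | hμ
  · simp
  have : NeZero μ := ⟨hμ⟩
  set c := (⨍ x, f x ∂μ)⁻¹ with hc
  have tangent : ∀ᵐ x ∂μ, 2 * c - c ^ 2 * f x ≤ (f x)⁻¹ := by
    filter_upwards [hpos] with x hx
    rw [← one_div, le_div_iff₀ hx]
    nlinarith [sq_nonneg (c * f x - 1)]
  have hc_mul : c ^ 2 * ⨍ x, f x ∂μ = c := by
    rw [hc, inv_pow, inv_mul_eq_div, sq, div_self_mul_self']
  calc c = 2 * c - c ^ 2 * ⨍ x, f x ∂μ := by rw [hc_mul, two_mul, add_sub_cancel_right]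
    _ = ⨍ x, (2 * c - c ^ 2 * f x) ∂μ := by
        simp only [average]
        rw [integral_sub (integrable_const _) (hf.to_average.const_mul _),
          integral_const_mul (c ^ 2), integral_const, probReal_univ, one_smul]
    _ ≤ ⨍ x, (f x)⁻¹ ∂μ :=
        integral_mono_ae ((integrable_const _).sub (hf.to_average.const_mul _))
          hf_inv.to_average (Measure.ae_smul_measure tangent _)

section FejerSum

variable {ι κ : Type*} [Fintype ι] [Fintype κ]

/-- The continuous and periodic extension of `f²` from the box to all `ω` (for nonzero orders): the
sum over `j` of the product Fejér kernels of order `k j`. -/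
noncomputable def fejerSum (k : κ → ℕ) (ω : ι → ℝ) : ℝ :=
  ∑ j, ∏ l, fejerKernel (k j) (ω l)

@[fun_prop]
theorem continuous_fejerSum (k : κ → ℕ) : Continuous (fejerSum k : (ι → ℝ) → ℝ) := by
  unfold fejerSum
  fun_prop

theorem fejerSum_pos (hcard : Fintype.card ι < Fintype.card κ) {k : κ → ℕ} (hk : ∀ j, k j ≠ 0)
    (hcop : Pairwise fun i j ↦ (k i).Coprime (k j)) (ω : ι → ℝ) : 0 < fejerSum k ω := by
  have hnonneg (j : κ) : 0 ≤ ∏ l, fejerKernel (k j) (ω l) :=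
    Finset.prod_nonneg fun l _ ↦ fejerKernel_nonneg _ _
  refine (Finset.sum_nonneg fun j _ ↦ hnonneg j).lt_of_ne' fun hsum ↦ ?_
  have hvanish (j : κ) : ∃ l, fejerKernel (k j) (ω l) = 0 := by
    simpa [Finset.prod_eq_zero_iff] using
      (Finset.sum_eq_zero_iff_of_nonneg fun j _ ↦ hnonneg j).1 hsum j (Finset.mem_univ j)
  choose l hl using hvanish
  obtain ⟨i, j, hij, hlij⟩ := Fintype.exists_ne_map_eq_of_card_lt l hcard
  have hi := (fejerKernel_eq_zero_iff (hk i)).1 (hl i)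
  have hj := (fejerKernel_eq_zero_iff (hk j)).1 (hl j)
  rw [← hlij] at hj
  exact geom_sum_ne_zero_of_coprime (hcop hij) (hk i) hj hi

theorem average_fejerSum (k : κ → ℕ) :
    ⨍ ω in univ.pi fun _ : ι ↦ Icc 0 (2 * Real.pi), fejerSum k ω =
      ∑ j, ((k j : ℝ) ^ Fintype.card ι)⁻¹ := by
  have hint (j : κ) : IntegrableOn (fun ω : ι → ℝ ↦ ∏ l, fejerKernel (k j) (ω l))
      (univ.pi fun _ ↦ Icc 0 (2 * Real.pi)) :=
    (by fun_prop : Continuous _).continuousOn.integrableOn_compact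
      (isCompact_univ_pi fun _ ↦ isCompact_Icc)
  calc ⨍ ω in univ.pi fun _ : ι ↦ Icc 0 (2 * Real.pi), fejerSum k ω
      = ∑ j, ⨍ ω in univ.pi fun _ : ι ↦ Icc 0 (2 * Real.pi), ∏ l, fejerKernel (k j) (ω l) :=
        integral_finsetSum _ fun j _ ↦ (hint j).to_average
    _ = ∑ j, ((k j : ℝ) ^ Fintype.card ι)⁻¹ := by
        simp only [volume_pi, setAverage_pi_prod _ _ fun _ ↦ fejerKernel _, average_fejerKernel,
          Finset.prod_const, Finset.card_univ, inv_pow]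

end FejerSum

theorem fmulti_sq_eq_fejerSum {d s : ℕ} {k : Fin s → ℕ} (hk : ∀ j, k j ≠ 0) {ω : Fin d → ℝ}
    (hω : ω ∈ univ.pi fun _ ↦ Icc 0 (2 * Real.pi)) : fmulti d s k ω ^ 2 = fejerSum k ω := by
  rw [fmulti, Real.sq_sqrt (Finset.sum_nonneg fun j _ ↦ Finset.prod_nonneg fun l _ ↦ sq_nonneg _)]
  exact Finset.sum_congr rfl fun j _ ↦ Finset.prod_congr rfl fun l _ ↦
    psinc_sq_eq_fejerKernel (hk j) (hω l (mem_univ l))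

theorem pow_div_card_le_inv_sum_inv_pow {κ K : Type*} [Fintype κ] [Nonempty κ] [Field K]
    [LinearOrder K] [IsStrictOrderedRing K] {a : K} (ha : 0 < a) {b : κ → K} (hab : ∀ j, a ≤ b j)
    (d : ℕ) :
    a ^ d / Fintype.card κ ≤ (∑ j, (b j ^ d)⁻¹)⁻¹ := by
  have hsum : ∑ j, (b j ^ d)⁻¹ ≤ Fintype.card κ * (a ^ d)⁻¹ := by
    rw [← nsmul_eq_mul, ← Finset.card_univ]
    refine Finset.sum_le_card_nsmul _ _ _ fun j _ ↦ ?_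
    have := hab j
    gcongr
  have hpos : 0 < ∑ j, (b j ^ d)⁻¹ :=
    Finset.sum_pos (fun j _ ↦ inv_pos.2 (pow_pos (ha.trans_le (hab j)) d)) Finset.univ_nonempty
  calc a ^ d / Fintype.card κ = (Fintype.card κ * (a ^ d)⁻¹)⁻¹ := by
        rw [mul_inv, inv_inv, div_eq_inv_mul]
    _ ≤ (∑ j, (b j ^ d)⁻¹)⁻¹ := inv_anti₀ hpos hsum

theorem stmt19_general {d s : ℕ} (hds : d < s) {k : Fin s → ℕ} (hk : ∀ j, k j ≠ 0)
    (hcop : Pairwise fun i j ↦ (k i).Coprime (k j)) :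
    (∑ j, ((k j : ℝ) ^ d)⁻¹)⁻¹ ≤
      ((2 * Real.pi) ^ d)⁻¹ *
        ∫ ω in univ.pi fun _ : Fin d ↦ Icc (0 : ℝ) (2 * Real.pi), 1 / fmulti d s k ω ^ 2 := by
  set Q : Set (Fin d → ℝ) := univ.pi fun _ ↦ Icc 0 (2 * Real.pi) with hQ
  have hQc : IsCompact Q := isCompact_univ_pi fun _ ↦ isCompact_Icc
  have hvol : volume.real Q = (2 * Real.pi) ^ d := by
    rw [hQ, measureReal_def, volume_pi_pi]
    simp [ENNReal.toReal_ofReal Real.pi_pos.le]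
  have hpos : ∀ ω : Fin d → ℝ, 0 < fejerSum k ω := fejerSum_pos (by simpa using hds) hk hcop
  have hcont : Continuous fun ω : Fin d → ℝ ↦ fejerSum k ω := continuous_fejerSum k
  have : IsFiniteMeasure (volume.restrict Q) := ⟨by simpa using hQc.measure_lt_top⟩
  calc (∑ j, ((k j : ℝ) ^ d)⁻¹)⁻¹ = (⨍ ω in Q, fejerSum k ω)⁻¹ := by
        rw [average_fejerSum, Fintype.card_fin]
    _ ≤ ⨍ ω in Q, (fejerSum k ω)⁻¹ :=
        inv_average_le_average_inv (ae_of_all _ hpos) (hcont.continuousOn.integrableOn_compact hQc)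
          ((hcont.inv₀ fun ω ↦ (hpos ω).ne').continuousOn.integrableOn_compact hQc)
    _ = ⨍ ω in Q, 1 / fmulti d s k ω ^ 2 :=
        setAverage_congr_fun hQc.measurableSet <| ae_of_all _ fun ω hω ↦ by
          rw [fmulti_sq_eq_fejerSum hk hω, one_div]
    _ = ((2 * Real.pi) ^ d)⁻¹ * ∫ ω in Q, 1 / fmulti d s k ω ^ 2 := by
        rw [setAverage_eq, hvol, smul_eq_mul]

open MeasureTheory in
theorem stmt19 (d : ℕ) (hd : 0 < d) (k : Fin (d + 1) → ℕ) (hk2 : ∀ j, 2 ≤ k j)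
    (hcop : ∀ i j, i ≠ j → Nat.Coprime (k i) (k j))
    (kmin : ℕ) (hkmin : IsLeast (Set.range k) kmin) :
    (kmin : ℝ) ^ d / (d + 1) ≤
      ((2 * Real.pi) ^ d)⁻¹ *
        ∫ ω in Set.univ.pi fun _ : Fin d => Set.Icc (0 : ℝ) (2 * Real.pi),
          1 / fmulti d (d + 1) k ω ^ 2 := by
  have hpos (j) : 0 < k j := two_pos.trans_le (hk2 j)
  obtain ⟨⟨i, rfl⟩, hmin⟩ := hkmin
  have hle : (k i : ℝ) ^ d / (d + 1) ≤ (∑ j, ((k j : ℝ) ^ d)⁻¹)⁻¹ := by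
    simpa using pow_div_card_le_inv_sum_inv_pow (Nat.cast_pos.2 (hpos i))
      (fun j ↦ Nat.cast_le.2 (hmin (mem_range_self j))) d
  exact hle.trans (stmt19_general d.lt_succ_self (fun j ↦ (hpos j).ne') fun i j ↦ hcop i j)
end
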